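/- arXiv:2404.04836 — 3 statements merged into one kernel-verified Lean document; each statement's English description precedes it below -/
import Mathlib

section
/- Let d ≥ 1 and let C₀, k₀, a₀, α be positive real constants, and fix m∞ > 0 and n∞ ≥ 0. Suppose m, n : ℝ × ℝ^d → ℝ and u : ℝ × ℝ^d → ℝ^d are continuously differentiable, with m(t,x) > 0 and n(t,x) > 0 for all (t,x), and that they solve the inviscid liquid–gas two-phase flow system pointwise: ∂ₜm + div(m u) = 0, ∂ₜn + div(n u) = 0, and for each component i, ∂ₜ(m uᵢ) + Σⱼ ∂_{xⱼ}(m uᵢ uⱼ) + ∂_{xᵢ}P = −α m uᵢ, where P := 𝒫(m, a₀ n/m). Then, setting s := a₀ n/m, c̃ := a₀ (n/m − n∞/m∞), D := sqrt(((1+s)·m − k₀)² + 4·k₀·s·m) and P_m := C₀·(1 + s + (((1+s)·m − k₀)·(1+s) + 2·k₀·s)/D), the following equations hold pointwise: ∂ₜP + (u·∇)P + P_m · m · div u = 0; ∂ₜu + (u·∇)u + (1/m)∇P = −α u; ∂ₜc̃ + (u·∇)c̃ = 0. -/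
open scoped BigOperators

/-- Partial derivative in time of a function on `ℝ × ℝ^d`. -/
noncomputable def dtime {d : ℕ} (f : ℝ × (Fin d → ℝ) → ℝ) (p : ℝ × (Fin d → ℝ)) : ℝ :=
  fderiv ℝ f p ((1 : ℝ), (0 : Fin d → ℝ))

/-- Partial derivative in the `i`-th space direction of a function on `ℝ × ℝ^d`. -/
noncomputable def dspace {d : ℕ} (f : ℝ × (Fin d → ℝ) → ℝ) (i : Fin d)
    (p : ℝ × (Fin d → ℝ)) : ℝ :=
  fderiv ℝ f p ((0 : ℝ), Pi.single i (1 : ℝ))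

/-- Spatial divergence `div u = ∑ i, ∂ᵢ uᵢ`. -/
noncomputable def divg {d : ℕ} (u : ℝ × (Fin d → ℝ) → Fin d → ℝ) (p : ℝ × (Fin d → ℝ)) : ℝ :=
  ∑ i, dspace (fun q => u q i) i p

/-- Convective derivative `(u · ∇) f = ∑ i, uᵢ ∂ᵢ f`. -/
noncomputable def conv {d : ℕ} (u : ℝ × (Fin d → ℝ) → Fin d → ℝ)
    (f : ℝ × (Fin d → ℝ) → ℝ) (p : ℝ × (Fin d → ℝ)) : ℝ :=
  ∑ i, u p i * dspace f i p

/-- The two-phase pressure law `𝒫(m,s)`. -/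
noncomputable def Plaw (C₀ k₀ m s : ℝ) : ℝ :=
  C₀ * ((1 + s) * m - k₀ + Real.sqrt (((1 + s) * m - k₀) ^ 2 + 4 * k₀ * s * m))

/-!
The three equations say how `P`, `u` and `c̃` evolve along the flow, that is, under the material
derivative `Dₜ = ∂ₜ + u · ∇`, which is differentiation in the single space-time direction `(1, u)`
and hence obeys all the usual rules. Conservation of mass reads `Dₜ m = -m div u`, and likewise for
`n`, so that `Dₜ (n / m) = 0`. The pressure is `F (m, s)` with `s = a₀ n / m` transported, so only
its dependence on `m` contributes: `Dₜ P = ∂ₘF · Dₜ m = -∂ₘF · m div u`. Finally, mass conservation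
turns the left-hand side of the momentum balance into `m Dₜ uᵢ + ∂ᵢ P`, and one divides by `m`.
-/

theorem differentiableAt_div {𝕜 E : Type*} [NontriviallyNormedField 𝕜] [NormedAddCommGroup E]
    [NormedSpace 𝕜 E] {f g : E → 𝕜} {x : E} (hf : DifferentiableAt 𝕜 f x)
    (hg : DifferentiableAt 𝕜 g x) (hg₀ : g x ≠ 0) :
    DifferentiableAt 𝕜 (fun y => f y / g y) x := by
  simpa only [div_eq_mul_inv] using hf.fun_mul (hg.fun_inv hg₀)

/-- The material derivative `Dₜ f = ∂ₜ f + (u · ∇) f` of `f` along the velocity field `u`. It is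
encoded as one directional derivative, along `(1, u)`, so that the calculus of `fderiv` applies
directly; `dtime_add_conv` relates it to the partial derivatives. -/
noncomputable def materialDeriv {d : ℕ} (u : ℝ × (Fin d → ℝ) → Fin d → ℝ)
    (f : ℝ × (Fin d → ℝ) → ℝ) (p : ℝ × (Fin d → ℝ)) : ℝ :=
  fderiv ℝ f p (1, u p)

section MaterialDerivative

variable {d : ℕ} {u : ℝ × (Fin d → ℝ) → Fin d → ℝ} {f g : ℝ × (Fin d → ℝ) → ℝ}
  {p : ℝ × (Fin d → ℝ)}

theorem dtime_add_conv (u : ℝ × (Fin d → ℝ) → Fin d → ℝ) (f : ℝ × (Fin d → ℝ) → ℝ)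
    (p : ℝ × (Fin d → ℝ)) : dtime f p + conv u f p = materialDeriv u f p := by
  have direction : ((1 : ℝ), u p) =
      (1, 0) + ∑ i, u p i • ((0 : ℝ), (Pi.single i 1 : Fin d → ℝ)) := by
    ext k
    · simp [Prod.fst_sum]
    · simp [Prod.snd_sum, Pi.single_apply]
  simp only [materialDeriv, direction, map_add, map_sum, map_smul, smul_eq_mul, dtime, conv, dspace]

theorem materialDeriv_const_mul (hf : DifferentiableAt ℝ f p) (a : ℝ) :
    materialDeriv u (fun q => a * f q) p = a * materialDeriv u f p := by
  simp [materialDeriv, fderiv_const_mul hf]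

theorem materialDeriv_sub_const (c : ℝ) :
    materialDeriv u (fun q => f q - c) p = materialDeriv u f p := by
  simp [materialDeriv, fderiv_sub_const]

theorem materialDeriv_mul (hf : DifferentiableAt ℝ f p) (hg : DifferentiableAt ℝ g p) :
    materialDeriv u (fun q => f q * g q) p =
      f p * materialDeriv u g p + g p * materialDeriv u f p := by
  simp [materialDeriv, fderiv_fun_mul hf hg]

theorem materialDeriv_inv (hf : DifferentiableAt ℝ f p) (hf₀ : f p ≠ 0) :
    materialDeriv u (fun q => (f q)⁻¹) p = -materialDeriv u f p / f p ^ 2 := by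
  have chain : HasFDerivAt (fun q => (f q)⁻¹) (-(f p ^ 2)⁻¹ • fderiv ℝ f p) p :=
    (hasDerivAt_inv hf₀).comp_hasFDerivAt p hf.hasFDerivAt
  rw [materialDeriv, chain.fderiv, materialDeriv, smul_apply, smul_eq_mul]
  ring

theorem materialDeriv_div (hf : DifferentiableAt ℝ f p) (hg : DifferentiableAt ℝ g p)
    (hg₀ : g p ≠ 0) :
    materialDeriv u (fun q => f q / g q) p =
      (materialDeriv u f p * g p - f p * materialDeriv u g p) / g p ^ 2 := by
  simp only [div_eq_mul_inv (f _)]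
  rw [materialDeriv_mul hf (hg.fun_inv hg₀), materialDeriv_inv hg hg₀]
  field_simp
  ring

theorem materialDeriv_comp_of_materialDeriv_right_eq_zero {F : ℝ → ℝ → ℝ} {F' : ℝ}
    (hf : DifferentiableAt ℝ f p) (hg : DifferentiableAt ℝ g p)
    (hF : DifferentiableAt ℝ (Function.uncurry F) (f p, g p))
    (hF' : HasDerivAt (fun x => F x (g p)) F' (f p)) (hg₀ : materialDeriv u g p = 0) :
    materialDeriv u (fun q => F (f q) (g q)) p = F' * materialDeriv u f p := by
  have hF'_eq : F' = fderiv ℝ (Function.uncurry F) (f p, g p) (1, 0) :=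
    hF'.unique (HasFDerivAt.comp_hasDerivAt (l := Function.uncurry F) (f p) hF.hasFDerivAt
      ((hasDerivAt_id' (f p)).prodMk (hasDerivAt_const (f p) (g p))))
  have chain : fderiv ℝ (fun q => F (f q) (g q)) p =
      (fderiv ℝ (Function.uncurry F) (f p, g p)).comp ((fderiv ℝ f p).prod (fderiv ℝ g p)) :=
    (HasFDerivAt.comp (g := Function.uncurry F) p hF.hasFDerivAt
      (hf.hasFDerivAt.prodMk hg.hasFDerivAt)).fderiv
  calc materialDeriv u (fun q => F (f q) (g q)) p
      = fderiv ℝ (Function.uncurry F) (f p, g p) (materialDeriv u f p, materialDeriv u g p) := by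
        simp [materialDeriv, chain]
    _ = fderiv ℝ (Function.uncurry F) (f p, g p) (materialDeriv u f p • (1, 0)) := by
        simp [hg₀]
    _ = F' * materialDeriv u f p := by
        rw [map_smul, ← hF'_eq, smul_eq_mul, mul_comm]

theorem divg_mul (hf : DifferentiableAt ℝ f p) (hu : DifferentiableAt ℝ u p) :
    divg (fun q i => f q * u q i) p = f p * divg u p + conv u f p := by
  simp only [divg, conv, dspace, Finset.mul_sum, ← Finset.sum_add_distrib]
  refine Finset.sum_congr rfl fun i _ => ?_
  simp [fderiv_fun_mul hf (differentiableAt_pi.1 hu i)]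

theorem dtime_add_divg_mul (hf : DifferentiableAt ℝ f p) (hu : DifferentiableAt ℝ u p) :
    dtime f p + divg (fun q i => f q * u q i) p = materialDeriv u f p + f p * divg u p := by
  rw [divg_mul hf hu, ← dtime_add_conv]
  ring

theorem dtime_add_divg_mul_mul (hf : DifferentiableAt ℝ f p) (hg : DifferentiableAt ℝ g p)
    (hu : DifferentiableAt ℝ u p) :
    dtime (fun q => f q * g q) p + divg (fun q i => f q * g q * u q i) p =
      g p * (dtime f p + divg (fun q i => f q * u q i) p) + f p * materialDeriv u g p := by
  rw [dtime_add_divg_mul (hf.fun_mul hg) hu, dtime_add_divg_mul hf hu, materialDeriv_mul hf hg]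
  ring

theorem materialDeriv_eq_of_conservation (hf : DifferentiableAt ℝ f p) (hu : DifferentiableAt ℝ u p)
    (heq : dtime f p + divg (fun q i => f q * u q i) p = 0) :
    materialDeriv u f p = -(f p * divg u p) := by
  rw [dtime_add_divg_mul hf hu] at heq
  exact eq_neg_of_add_eq_zero_left heq

theorem materialDeriv_div_eq_zero_of_conservation (hf : DifferentiableAt ℝ f p)
    (hg : DifferentiableAt ℝ g p) (hu : DifferentiableAt ℝ u p) (hg₀ : g p ≠ 0)
    (heqf : dtime f p + divg (fun q i => f q * u q i) p = 0)
    (heqg : dtime g p + divg (fun q i => g q * u q i) p = 0) :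
    materialDeriv u (fun q => f q / g q) p = 0 := by
  rw [materialDeriv_div hf hg hg₀, materialDeriv_eq_of_conservation hf hu heqf,
    materialDeriv_eq_of_conservation hg hu heqg]
  ring

theorem materialDeriv_add_one_div_mul_eq_of_momentum {π φ : ℝ} (hf : DifferentiableAt ℝ f p)
    (hg : DifferentiableAt ℝ g p) (hu : DifferentiableAt ℝ u p) (hf₀ : f p ≠ 0)
    (heqf : dtime f p + divg (fun q i => f q * u q i) p = 0)
    (heq : dtime (fun q => f q * g q) p + divg (fun q i => f q * g q * u q i) p + π = f p * φ) :
    materialDeriv u g p + 1 / f p * π = φ := by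
  rw [dtime_add_divg_mul_mul hf hg hu, heqf] at heq
  field_simp
  linear_combination heq

end MaterialDerivative

section PressureLaw

variable {C₀ k₀ m s : ℝ}

theorem differentiableAt_uncurry_Plaw (h : ((1 + s) * m - k₀) ^ 2 + 4 * k₀ * s * m ≠ 0) :
    DifferentiableAt ℝ (Function.uncurry (Plaw C₀ k₀)) (m, s) := by
  unfold Function.uncurry Plaw
  fun_prop (disch := exact h)

theorem hasDerivAt_Plaw_left (h : ((1 + s) * m - k₀) ^ 2 + 4 * k₀ * s * m ≠ 0) :
    HasDerivAt (fun x => Plaw C₀ k₀ x s)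
      (C₀ * (1 + s + (((1 + s) * m - k₀) * (1 + s) + 2 * k₀ * s) /
        √(((1 + s) * m - k₀) ^ 2 + 4 * k₀ * s * m))) m := by
  have linear : HasDerivAt (fun x => (1 + s) * x - k₀) (1 + s) m := by
    simpa using ((hasDerivAt_id m).const_mul (1 + s)).sub_const k₀
  have radicand : HasDerivAt (fun x => ((1 + s) * x - k₀) ^ 2 + 4 * k₀ * s * x)
      (2 * (((1 + s) * m - k₀) * (1 + s) + 2 * k₀ * s)) m := by
    refine ((linear.fun_pow 2).fun_add ((hasDerivAt_id' m).const_mul (4 * k₀ * s))).congr_deriv ?_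
    push_cast
    ring
  refine ((linear.fun_add (radicand.sqrt h)).const_mul C₀).congr_deriv ?_
  rw [mul_div_mul_left _ _ two_ne_zero]

end PressureLaw

theorem two_phase_reformulation_general {d : ℕ} {F : ℝ → ℝ → ℝ} {F' a₀ α : ℝ} (c : ℝ)
    {m n : ℝ × (Fin d → ℝ) → ℝ} {u : ℝ × (Fin d → ℝ) → Fin d → ℝ} {p : ℝ × (Fin d → ℝ)}
    (hm : DifferentiableAt ℝ m p) (hn : DifferentiableAt ℝ n p) (hu : DifferentiableAt ℝ u p)
    (hm₀ : m p ≠ 0)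
    (hF : DifferentiableAt ℝ (Function.uncurry F) (m p, a₀ * n p / m p))
    (hF' : HasDerivAt (fun x => F x (a₀ * n p / m p)) F' (m p))
    (heqm : dtime m p + divg (fun q i => m q * u q i) p = 0)
    (heqn : dtime n p + divg (fun q i => n q * u q i) p = 0)
    (heqmom : ∀ i, dtime (fun q => m q * u q i) p
        + divg (fun q j => m q * u q i * u q j) p
        + dspace (fun q => F (m q) (a₀ * n q / m q)) i p
      = -α * (m p * u p i)) :
    (dtime (fun q => F (m q) (a₀ * n q / m q)) p
        + conv u (fun q => F (m q) (a₀ * n q / m q)) p + F' * m p * divg u p = 0) ∧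
      (∀ i, dtime (fun q => u q i) p + conv u (fun q => u q i) p
          + (1 / m p) * dspace (fun q => F (m q) (a₀ * n q / m q)) i p
        = -α * u p i) ∧
      (dtime (fun q => a₀ * (n q / m q - c)) p
        + conv u (fun q => a₀ * (n q / m q - c)) p = 0) := by
  have ratio_diff : DifferentiableAt ℝ (fun q => n q / m q) p := differentiableAt_div hn hm hm₀
  have ratio_transport : materialDeriv u (fun q => n q / m q) p = 0 :=
    materialDeriv_div_eq_zero_of_conservation hn hm hu hm₀ heqn heqm
  simp only [dtime_add_conv]
  refine ⟨?_, fun i => ?_, ?_⟩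
  · have s_diff : DifferentiableAt ℝ (fun q => a₀ * n q / m q) p :=
      differentiableAt_div (hn.const_mul a₀) hm hm₀
    have s_transport : materialDeriv u (fun q => a₀ * n q / m q) p = 0 := by
      simp only [mul_div_assoc, materialDeriv_const_mul ratio_diff, ratio_transport, mul_zero]
    rw [materialDeriv_comp_of_materialDeriv_right_eq_zero hm s_diff hF hF' s_transport,
      materialDeriv_eq_of_conservation hm hu heqm]
    ring
  · exact materialDeriv_add_one_div_mul_eq_of_momentum hm (differentiableAt_pi.1 hu i) hu hm₀ heqm
      ((heqmom i).trans (mul_left_comm _ _ _))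
  · rw [materialDeriv_const_mul (ratio_diff.sub_const c), materialDeriv_sub_const,
      ratio_transport, mul_zero]

/-- Reformulation of the inviscid liquid–gas two-phase flow system in the unknowns
`(P, u, c̃)`: if `(m, n, u)` solves the original system, then the pressure `P`, the
velocity `u` and `c̃ = a₀(n/m − nInf/mInf)` solve the reformulated system. -/
theorem two_phase_reformulation {d : ℕ} (hd : 1 ≤ d)
    (C₀ k₀ a₀ α mInf nInf : ℝ)
    (hC₀ : 0 < C₀) (hk₀ : 0 < k₀) (ha₀ : 0 < a₀) (hα : 0 < α)
    (hmInf : 0 < mInf) (hnInf : 0 ≤ nInf)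
    (m n : ℝ × (Fin d → ℝ) → ℝ) (u : ℝ × (Fin d → ℝ) → Fin d → ℝ)
    (hm : ContDiff ℝ 1 m) (hn : ContDiff ℝ 1 n) (hu : ContDiff ℝ 1 u)
    (hmpos : ∀ p, 0 < m p) (hnpos : ∀ p, 0 < n p)
    (heqm : ∀ p, dtime m p + divg (fun q i => m q * u q i) p = 0)
    (heqn : ∀ p, dtime n p + divg (fun q i => n q * u q i) p = 0)
    (heqmom : ∀ p i, dtime (fun q => m q * u q i) p
        + (∑ j, dspace (fun q => m q * u q i * u q j) j p)
        + dspace (fun q => Plaw C₀ k₀ (m q) (a₀ * n q / m q)) i p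
      = -α * (m p * u p i)) :
    ∀ p,
      (dtime (fun q => Plaw C₀ k₀ (m q) (a₀ * n q / m q)) p
          + conv u (fun q => Plaw C₀ k₀ (m q) (a₀ * n q / m q)) p
          + (C₀ * (1 + (a₀ * n p / m p)
              + (((1 + (a₀ * n p / m p)) * m p - k₀) * (1 + (a₀ * n p / m p))
                  + 2 * k₀ * (a₀ * n p / m p))
                / Real.sqrt (((1 + (a₀ * n p / m p)) * m p - k₀) ^ 2
                    + 4 * k₀ * (a₀ * n p / m p) * m p)))
            * m p * divg u p = 0) ∧
      (∀ i, dtime (fun q => u q i) p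
          + (∑ j, u p j * dspace (fun q => u q i) j p)
          + (1 / m p) * dspace (fun q => Plaw C₀ k₀ (m q) (a₀ * n q / m q)) i p
        = -α * u p i) ∧
      (dtime (fun q => a₀ * (n q / m q - nInf / mInf)) p
          + conv u (fun q => a₀ * (n q / m q - nInf / mInf)) p = 0) := by
  intro p
  have radicand_pos : 0 < ((1 + a₀ * n p / m p) * m p - k₀) ^ 2
      + 4 * k₀ * (a₀ * n p / m p) * m p := by
    have := hmpos p
    have := hnpos p
    positivity
  exact two_phase_reformulation_general (nInf / mInf) (hm.differentiable one_ne_zero p)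
    (hn.differentiable one_ne_zero p) (hu.differentiable one_ne_zero p) (hmpos p).ne'
    (differentiableAt_uncurry_Plaw radicand_pos.ne') (hasDerivAt_Plaw_left radicand_pos.ne')
    (heqm p) (heqn p) (heqmom p)
end

section
/- Let C₀ > 0, k₀ > 0, m > 0 and s ≥ 0 be real numbers, and assume that s > 0 or m > k₀. Then, with P := 𝒫(m,s), the denominator 2·C₀·(1+s)·P + 4·k₀·C₀²·s is positive and the pressure law can be inverted for the liquid mass: (P² + 2·k₀·C₀·P) / (2·C₀·(1+s)·P + 4·k₀·C₀²·s) = m. -/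
/-!
The pressure `P = 𝒫(m,s)` is a root of
`P² = 2C₀((1+s)m - k₀)P + 4k₀C₀²sm`, an equation that is affine in `m`; the asserted quotient is its
solution for `m`. The denominator is positive because
`(1+s)²(((1+s)m - k₀)² + 4k₀sm) = ((1+s)²m - (1-s)k₀)² + 4sk₀²`, which rewrites it as
`2C₀²(x + √(x² + 4sk₀²))` with `x = (1+s)²m - (1-s)k₀`.
-/

theorem add_sqrt_sq_add_pos {x y : ℝ} (h : 0 < x ∨ 0 < y) : 0 < x + √(x ^ 2 + y) := by
  rcases h with hx | hy
  · positivity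
  · have habs : |x| < √(x ^ 2 + y) := Real.lt_sqrt_of_sq_lt (by rw [sq_abs]; linarith)
    linarith [neg_abs_le x]

theorem add_sqrt_sq_add_sq {x y : ℝ} (h : 0 ≤ x ^ 2 + y) :
    (x + √(x ^ 2 + y)) ^ 2 = 2 * x * (x + √(x ^ 2 + y)) + y := by
  linear_combination Real.sq_sqrt h

section PressureLaw

variable {C₀ k₀ m s : ℝ}

theorem one_add_sq_mul_plaw_radicand (k₀ m s : ℝ) :
    (1 + s) ^ 2 * (((1 + s) * m - k₀) ^ 2 + 4 * k₀ * s * m) =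
      ((1 + s) ^ 2 * m - (1 - s) * k₀) ^ 2 + 4 * s * k₀ ^ 2 := by
  ring

theorem plaw_radicand_nonneg (k₀ m : ℝ) (hs : 0 ≤ s) :
    0 ≤ ((1 + s) * m - k₀) ^ 2 + 4 * k₀ * s * m := by
  refine nonneg_of_mul_nonneg_right (a := (1 + s) ^ 2) ?_ (by positivity)
  rw [one_add_sq_mul_plaw_radicand]
  positivity

theorem plaw_sq (C₀ : ℝ) (hrad : 0 ≤ ((1 + s) * m - k₀) ^ 2 + 4 * k₀ * s * m) :
    Plaw C₀ k₀ m s ^ 2 =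
      2 * C₀ * ((1 + s) * m - k₀) * Plaw C₀ k₀ m s + 4 * k₀ * C₀ ^ 2 * s * m := by
  unfold Plaw
  linear_combination C₀ ^ 2 * add_sqrt_sq_add_sq hrad

theorem plaw_denominator_eq (C₀ k₀ m : ℝ) (hs : -1 ≤ s) :
    2 * C₀ * (1 + s) * Plaw C₀ k₀ m s + 4 * k₀ * C₀ ^ 2 * s =
      2 * C₀ ^ 2 * ((1 + s) ^ 2 * m - (1 - s) * k₀ +
        √(((1 + s) ^ 2 * m - (1 - s) * k₀) ^ 2 + 4 * s * k₀ ^ 2)) := by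
  rw [← one_add_sq_mul_plaw_radicand, Real.sqrt_mul (sq_nonneg _),
    Real.sqrt_sq (by linarith), Plaw]
  ring

theorem plaw_denominator_pos (hC₀ : C₀ ≠ 0) (hs : 0 ≤ s) (h : 0 < s ∧ k₀ ≠ 0 ∨ k₀ < m) :
    0 < 2 * C₀ * (1 + s) * Plaw C₀ k₀ m s + 4 * k₀ * C₀ ^ 2 * s := by
  rw [plaw_denominator_eq C₀ k₀ m (by linarith)]
  refine mul_pos (by positivity) (add_sqrt_sq_add_pos ?_)
  rcases h with ⟨hs_pos, hk₀⟩ | hkm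
  · right
    positivity
  · rcases hs.eq_or_lt with rfl | hs_pos
    · left
      linarith
    · rcases eq_or_ne k₀ 0 with rfl | hk₀
      · left
        simpa using mul_pos (by positivity : 0 < (1 + s) ^ 2) hkm
      · right
        positivity

theorem pressure_inversion_general (hC₀ : C₀ ≠ 0) (hs : 0 ≤ s)
    (h : 0 < s ∧ k₀ ≠ 0 ∨ k₀ < m) :
    0 < 2 * C₀ * (1 + s) * Plaw C₀ k₀ m s + 4 * k₀ * C₀ ^ 2 * s ∧
    (Plaw C₀ k₀ m s ^ 2 + 2 * k₀ * C₀ * Plaw C₀ k₀ m s)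
        / (2 * C₀ * (1 + s) * Plaw C₀ k₀ m s + 4 * k₀ * C₀ ^ 2 * s) = m := by
  have hden := plaw_denominator_pos hC₀ hs h
  refine ⟨hden, ?_⟩
  rw [div_eq_iff hden.ne']
  linear_combination plaw_sq C₀ (plaw_radicand_nonneg k₀ m hs)

end PressureLaw

/-- If `s > 0` or `m > k₀` then, with `P = 𝒫(m,s)`, the denominator
`2C₀(1+s)P + 4k₀C₀²s` is positive and the pressure law can be inverted for the liquid
mass: `(P² + 2k₀C₀P) / (2C₀(1+s)P + 4k₀C₀²s) = m`. -/
theorem pressure_inversion (C₀ k₀ m s : ℝ)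
    (hC₀ : 0 < C₀) (hk₀ : 0 < k₀) (hm : 0 < m) (hs : 0 ≤ s)
    (h : 0 < s ∨ k₀ < m) :
    0 < 2 * C₀ * (1 + s) * Plaw C₀ k₀ m s + 4 * k₀ * C₀ ^ 2 * s ∧
    (Plaw C₀ k₀ m s ^ 2 + 2 * k₀ * C₀ * Plaw C₀ k₀ m s)
        / (2 * C₀ * (1 + s) * Plaw C₀ k₀ m s + 4 * k₀ * C₀ ^ 2 * s) = m :=
  pressure_inversion_general hC₀.ne' hs (h.imp_left fun hs_pos ↦ ⟨hs_pos, hk₀.ne'⟩)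
end

section
/- Let d ≥ 1 and κ₂, α > 0. Suppose P̃ : ℝ × ℝ^d → ℝ is three times continuously differentiable, ũ : ℝ × ℝ^d → ℝ^d is twice continuously differentiable, G̃₁ : ℝ × ℝ^d → ℝ is continuously differentiable, G̃₂ : ℝ × ℝ^d → ℝ^d, and pointwise ∂ₜP̃ + κ₂ div ũ = G̃₁ and ∂ₜũ + κ₂ ∇P̃ + α ũ = G̃₂. Then the effective flux Z := κ₂ ∇P̃ + α ũ satisfies pointwise the damped equation (1/α) ∂ₜZ + Z = (κ₂³/α²) ∇ΔP̃ − (κ₂²/α²) ∇(div Z) + (κ₂/α) ∇G̃₁ + G̃₂, where ΔP̃ := Σᵢ ∂²_{xᵢ} P̃ is the spatial Laplacian. -/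
open scoped BigOperators

/-- Spatial Laplacian `Δf = ∑ i, ∂ᵢ∂ᵢ f`. -/
noncomputable def lap {d : ℕ} (f : ℝ × (Fin d → ℝ) → ℝ) (p : ℝ × (Fin d → ℝ)) : ℝ :=
  ∑ i, dspace (fun q => dspace f i q) i p

/-!
Differentiating `Z = κ₂∇P + αu` in time gives `κ₂∂ₜ∇P + α∂ₜu`, whose second term the momentum
equation rewrites as `α(G₂ − Z)`. Mixed partial derivatives commute, so the mass equation gives
`∂ₜ∇P = ∇G₁ − κ₂∇(div u)`. Finally `div Z = κ₂ΔP + α div u` eliminates `div u` in favour of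
`div Z` and `ΔP`.
-/

section DirectionalDerivative

variable {𝕜 E F : Type*} [NontriviallyNormedField 𝕜] [NormedAddCommGroup E] [NormedSpace 𝕜 E]
  [NormedAddCommGroup F] [NormedSpace 𝕜 F] {f g : E → F} {x : E}

theorem fderiv_fderiv_apply_comm {n : WithTop ℕ∞} (hf : ContDiffAt 𝕜 n f x)
    (hn : minSmoothness 𝕜 2 ≤ n) (v w : E) :
    fderiv 𝕜 (fun y => fderiv 𝕜 f y v) x w = fderiv 𝕜 (fun y => fderiv 𝕜 f y w) x v := by
  have hdiff : DifferentiableAt 𝕜 (fderiv 𝕜 f) x :=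
    (hf.fderiv_right (m := 1) (le_minSmoothness.trans hn)).differentiableAt one_ne_zero
  have fderiv_apply (a b : E) :
      fderiv 𝕜 (fun y => fderiv 𝕜 f y a) x b = fderiv 𝕜 (fderiv 𝕜 f) x b a := by
    simp [fderiv_clm_apply hdiff (differentiableAt_const a)]
  rw [fderiv_apply, fderiv_apply]
  exact (hf.isSymmSndFDerivAt hn).eq w v

theorem fderiv_const_smul_add_const_smul (a b : 𝕜) (hf : DifferentiableAt 𝕜 f x)
    (hg : DifferentiableAt 𝕜 g x) :
    fderiv 𝕜 (fun y => a • f y + b • g y) x = a • fderiv 𝕜 f x + b • fderiv 𝕜 g x :=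
  ((hf.hasFDerivAt.const_smul a).add (hg.hasFDerivAt.const_smul b)).fderiv

end DirectionalDerivative

section SpaceTime

variable {d : ℕ} {m n : WithTop ℕ∞} {f g : ℝ × (Fin d → ℝ) → ℝ}
  {u v : ℝ × (Fin d → ℝ) → Fin d → ℝ} {p : ℝ × (Fin d → ℝ)}

theorem contDiff_dtime (hf : ContDiff ℝ n f) (hmn : m + 1 ≤ n) : ContDiff ℝ m (dtime f) :=
  (hf.fderiv_right hmn).clm_apply contDiff_const

theorem contDiff_dspace (hf : ContDiff ℝ n f) (hmn : m + 1 ≤ n) (i : Fin d) :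
    ContDiff ℝ m (dspace f i) :=
  (hf.fderiv_right hmn).clm_apply contDiff_const

theorem contDiff_divg (hu : ContDiff ℝ n u) (hmn : m + 1 ≤ n) : ContDiff ℝ m (divg u) :=
  ContDiff.sum fun i _ => contDiff_dspace (contDiff_pi.1 hu i) hmn i

theorem lap_eq_divg_dspace (f : ℝ × (Fin d → ℝ) → ℝ) :
    lap f = divg (fun q i => dspace f i q) :=
  rfl

theorem contDiff_lap (hf : ContDiff ℝ n f) (hmn : m + 1 + 1 ≤ n) : ContDiff ℝ m (lap f) :=
  contDiff_divg (contDiff_pi.2 (contDiff_dspace hf hmn)) le_rfl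

theorem dtime_dspace_comm (hf : ContDiffAt ℝ 2 f p) (i : Fin d) :
    dtime (dspace f i) p = dspace (dtime f) i p :=
  fderiv_fderiv_apply_comm hf (by simp) _ _

theorem dtime_const_mul_add_const_mul (a b : ℝ) (hf : DifferentiableAt ℝ f p)
    (hg : DifferentiableAt ℝ g p) :
    dtime (fun q => a * f q + b * g q) p = a * dtime f p + b * dtime g p :=
  DFunLike.congr_fun (fderiv_const_smul_add_const_smul a b hf hg) _

theorem dspace_const_mul_add_const_mul (a b : ℝ) (hf : DifferentiableAt ℝ f p)
    (hg : DifferentiableAt ℝ g p) (i : Fin d) :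
    dspace (fun q => a * f q + b * g q) i p = a * dspace f i p + b * dspace g i p :=
  DFunLike.congr_fun (fderiv_const_smul_add_const_smul a b hf hg) _

theorem divg_const_mul_add_const_mul (a b : ℝ) (hu : DifferentiableAt ℝ u p)
    (hv : DifferentiableAt ℝ v p) :
    divg (fun q i => a * u q i + b * v q i) p = a * divg u p + b * divg v p := by
  simp only [divg, Finset.mul_sum, ← Finset.sum_add_distrib]
  exact Finset.sum_congr rfl fun i _ => dspace_const_mul_add_const_mul a b
    (differentiableAt_pi.1 hu i) (differentiableAt_pi.1 hv i) i

end SpaceTime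

/-- The effective flux `Z = κ∇P + αu` of a pressure `P` and a velocity field `u`. -/
noncomputable def effectiveFlux {d : ℕ} (κ α : ℝ) (P : ℝ × (Fin d → ℝ) → ℝ)
    (u : ℝ × (Fin d → ℝ) → Fin d → ℝ) (p : ℝ × (Fin d → ℝ)) (i : Fin d) : ℝ :=
  κ * dspace P i p + α * u p i

section EffectiveFlux

variable {d : ℕ} {κ α : ℝ} {P G₁ : ℝ × (Fin d → ℝ) → ℝ}
  {u G₂ : ℝ × (Fin d → ℝ) → Fin d → ℝ} {p : ℝ × (Fin d → ℝ)}

theorem dtime_effectiveFlux {i : Fin d} (hP : DifferentiableAt ℝ (dspace P i) p)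
    (hu : DifferentiableAt ℝ (fun q => u q i) p) :
    dtime (fun q => effectiveFlux κ α P u q i) p
      = κ * dtime (dspace P i) p + α * dtime (fun q => u q i) p :=
  dtime_const_mul_add_const_mul κ α hP hu

theorem divg_effectiveFlux (hP : ∀ i, DifferentiableAt ℝ (dspace P i) p)
    (hu : DifferentiableAt ℝ u p) :
    divg (effectiveFlux κ α P u) p = κ * lap P p + α * divg u p := by
  rw [lap_eq_divg_dspace]
  exact divg_const_mul_add_const_mul κ α (differentiableAt_pi.2 hP) hu

theorem dspace_divg_effectiveFlux (hP : ∀ i, Differentiable ℝ (dspace P i))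
    (hu : Differentiable ℝ u) (hlap : DifferentiableAt ℝ (lap P) p)
    (hdiv : DifferentiableAt ℝ (divg u) p) (i : Fin d) :
    dspace (divg (effectiveFlux κ α P u)) i p
      = κ * dspace (lap P) i p + α * dspace (divg u) i p := by
  have hflux : divg (effectiveFlux κ α P u) = fun q => κ * lap P q + α * divg u q :=
    funext fun q => divg_effectiveFlux (fun j => hP j q) (hu q)
  rw [hflux]
  exact dspace_const_mul_add_const_mul κ α hlap hdiv i

theorem dtime_dspace_add_of_mass_eq (hP : ContDiff ℝ 2 P)
    (hdiv : DifferentiableAt ℝ (divg u) p) (hmass : ∀ q, dtime P q + κ * divg u q = G₁ q)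
    (i : Fin d) :
    dtime (dspace P i) p + κ * dspace (divg u) i p = dspace G₁ i p := by
  have hdtime : Differentiable ℝ (dtime P) :=
    (contDiff_dtime hP one_add_one_eq_two.le).differentiable one_ne_zero
  rw [dtime_dspace_comm hP.contDiffAt, ← funext hmass]
  simpa only [one_mul] using (dspace_const_mul_add_const_mul 1 κ (hdtime p) hdiv i).symm

theorem effective_flux_damped_general (hα : α ≠ 0) (hP : ContDiff ℝ 2 P)
    (hlap : Differentiable ℝ (lap P)) (hu : Differentiable ℝ u)
    (hdiv : Differentiable ℝ (divg u))
    (hmass : ∀ p, dtime P p + κ * divg u p = G₁ p)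
    (hmomentum : ∀ p i, dtime (fun q => u q i) p + κ * dspace P i p + α * u p i = G₂ p i)
    (p : ℝ × (Fin d → ℝ)) (i : Fin d) :
    (1 / α) * dtime (fun q => effectiveFlux κ α P u q i) p + effectiveFlux κ α P u p i
      = (κ ^ 3 / α ^ 2) * dspace (lap P) i p
        - (κ ^ 2 / α ^ 2) * dspace (divg (effectiveFlux κ α P u)) i p
        + (κ / α) * dspace G₁ i p + G₂ p i := by
  have hgrad (j : Fin d) : Differentiable ℝ (dspace P j) :=
    (contDiff_dspace hP one_add_one_eq_two.le j).differentiable one_ne_zero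
  rw [dtime_effectiveFlux (hgrad i p) (differentiableAt_pi.1 (hu p) i),
    dspace_divg_effectiveFlux hgrad hu (hlap p) (hdiv p),
    ← dtime_dspace_add_of_mass_eq hP (hdiv p) hmass, ← hmomentum, effectiveFlux]
  field_simp
  ring

end EffectiveFlux

/-- If `∂ₜP̃ + κ₂ div ũ = G̃₁` and `∂ₜũ + κ₂∇P̃ + αũ = G̃₂`, then the effective flux
`Z = κ₂∇P̃ + αũ` satisfies the damped equation
`(1/α)∂ₜZ + Z = (κ₂³/α²)∇ΔP̃ − (κ₂²/α²)∇(div Z) + (κ₂/α)∇G̃₁ + G̃₂`. -/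
theorem effective_flux_damped {d : ℕ} (hd : 1 ≤ d) (κ₂ α : ℝ)
    (hκ₂ : 0 < κ₂) (hα : 0 < α)
    (P : ℝ × (Fin d → ℝ) → ℝ) (u : ℝ × (Fin d → ℝ) → Fin d → ℝ)
    (G₁ : ℝ × (Fin d → ℝ) → ℝ) (G₂ : ℝ × (Fin d → ℝ) → Fin d → ℝ)
    (hP : ContDiff ℝ 3 P) (hu : ContDiff ℝ 2 u) (hG₁ : ContDiff ℝ 1 G₁)
    (heq1 : ∀ p, dtime P p + κ₂ * divg u p = G₁ p)
    (heq2 : ∀ p i, dtime (fun q => u q i) p + κ₂ * dspace P i p + α * u p i = G₂ p i) :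
    ∀ p i,
      (1 / α) * dtime (fun q => κ₂ * dspace P i q + α * u q i) p
          + (κ₂ * dspace P i p + α * u p i)
        = (κ₂ ^ 3 / α ^ 2) * dspace (fun q => lap P q) i p
          - (κ₂ ^ 2 / α ^ 2)
              * dspace (fun q => divg (fun r j => κ₂ * dspace P j r + α * u r j) q) i p
          + (κ₂ / α) * dspace G₁ i p + G₂ p i :=
  effective_flux_damped_general hα.ne' (hP.of_le (by norm_num))
    ((contDiff_lap hP (by norm_num)).differentiable one_ne_zero) (hu.differentiable two_ne_zero)
    ((contDiff_divg hu one_add_one_eq_two.le).differentiable one_ne_zero) heq1 heq2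
end
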